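/- Let (Γ, ρ) be a compact metric space and let 𝒮_a[τ_D, N₀] be the set of piecewise constant, right-continuous signals σ: ℝ₊ → Γ with average dwell-time τ_D > 0 and chatter bound N₀ ∈ ℕ. Then 𝒮_a[τ_D, N₀] is compact with respect to the metric d(u,v) = Σ_{n=1}^∞ 2^{-n} ∫₀ⁿ ρ(u(s), v(s)) ds. -/

import Mathlib

open Filter Set MeasureTheory

/-- The switching times (points of left-discontinuity) of a signal `σ` on `(0,∞)`. -/
def SwitchTimes {Γ : Type*} (σ : ℝ → Γ) : Set ℝ :=
  {s | 0 < s ∧ ∀ ε > 0, ∃ u, s - ε < u ∧ u < s ∧ σ u ≠ σ s}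

/-- `σ` is locally constant from the right at every time (right-continuity and
piecewise constancy from the right). -/
def RightLocConst {Γ : Type*} (σ : ℝ → Γ) : Prop :=
  ∀ s : ℝ, ∃ ε > 0, ∀ u : ℝ, s ≤ u → u < s + ε → σ u = σ s

/-- `σ` has average dwell-time `τD` and chatter bound `N₀`: the number of switching
times in any open interval `(τ₁,τ₂) ⊆ ℝ₊` is at most `N₀ + (τ₂ - τ₁)/τD`. -/
def HasADT {Γ : Type*} (σ : ℝ → Γ) (τD : ℝ) (N₀ : ℕ) : Prop :=
  ∀ τ₁ τ₂ : ℝ, 0 ≤ τ₁ → τ₁ < τ₂ →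
    (Nat.card ↥(SwitchTimes σ ∩ Set.Ioo τ₁ τ₂) : ℝ) ≤ (N₀ : ℝ) + (τ₂ - τ₁) / τD

/-- A switching signal with average dwell-time `τD > 0` and chatter bound `N₀`:
piecewise constant, right-continuous, with the average dwell-time property. -/
def IsSwitchingSignal {Γ : Type*} (σ : ℝ → Γ) (τD : ℝ) (N₀ : ℕ) : Prop :=
  RightLocConst σ ∧ HasADT σ τD N₀

/-!
After passing to a subsequence, the values at rational times converge (`Γ` is compact) and the sets
of switching times converge in the sense of Kuratowski to a set `J`. Away from `J` the
signals have eventually no switching times near a given point, so they are constant there and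
converge to a locally constant limit; the limit signal is the right-continuous regularization of
that function, with switching times in `J`. Cardinality is lower semicontinuous under Kuratowski
convergence, so `J`, and hence the limit signal, inherits the dwell-time bound. In particular `J` is
countable, so convergence is almost everywhere and dominated convergence gives it in the metric `d`.
-/

open Function
open scoped Topology

section KuratowskiLimit

variable {ι X : Type*} [TopologicalSpace X]

/-- The lower Kuratowski limit of a family of sets: the points all of whose neighbourhoods are
eventually met by the sets. Here it collects the possible switching times of the limit signal. -/
def lowerLimit (A : ι → Set X) (l : Filter ι) : Set X :=
  {x | ∀ U ∈ 𝓝 x, ∀ᶠ k in l, (A k ∩ U).Nonempty}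

theorem eventually_le_encard_inter [T2Space X] {A : ι → Set X} {l : Filter ι} {V : Set X}
    (hV : IsOpen V) {m : ℕ} (hm : m ≤ (lowerLimit A l ∩ V).encard) :
    ∀ᶠ k in l, m ≤ (A k ∩ V).encard := by
  obtain ⟨F, hF, hFm⟩ := exists_subset_encard_eq hm
  have hFfin : F.Finite := finite_of_encard_eq_coe hFm
  obtain ⟨U, hU, hdisj⟩ := hFfin.t2_separation
  have hmeet : ∀ᶠ k in l, ∀ x ∈ F, (A k ∩ (U x ∩ V)).Nonempty :=
    (eventually_all_finite hFfin).2 fun x hx =>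
      (hF hx).1 _ (inter_mem ((hU x).2.mem_nhds (hU x).1) (hV.mem_nhds (hF hx).2))
  filter_upwards [hmeet] with k hk
  choose! p hpA hpU hpV using hk
  have hinj : InjOn p F := fun x hx y hy hxy =>
    hdisj.elim_set hx hy (p x) (hpU x hx) (hxy ▸ hpU y hy)
  calc (m : ℕ∞) = (p '' F).encard := by rw [hinj.encard_image, hFm]
    _ ≤ (A k ∩ V).encard := encard_le_encard (image_subset_iff.2 fun x hx => ⟨hpA x hx, hpV x hx⟩)

theorem encard_lowerLimit_inter_le [T2Space X] {A : ι → Set X} {l : Filter ι} {V : Set X}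
    (hV : IsOpen V) {n : ℕ∞} (h : ∃ᶠ k in l, (A k ∩ V).encard ≤ n) :
    (lowerLimit A l ∩ V).encard ≤ n := by
  refine ENat.forall_natCast_le_iff_le.1 fun m hm => ?_
  obtain ⟨k, hkn, hmk⟩ := (h.and_eventually (eventually_le_encard_inter hV hm)).exists
  exact hmk.trans hkn

theorem exists_subseq_eventually_disjoint_of_notMem_lowerLimit [SecondCountableTopology X]
    (A : ℕ → Set X) :
    ∃ φ : ℕ → ℕ, StrictMono φ ∧ ∀ x ∉ lowerLimit (fun k => A (φ k)) atTop,
      ∃ U ∈ 𝓝 x, ∀ᶠ k in atTop, Disjoint (A (φ k)) U := by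
  classical
  have hbasis := TopologicalSpace.isBasis_countableBasis X
  obtain ⟨L, φ, hφ, hL⟩ := CompactSpace.tendsto_subseq
    fun k (V : TopologicalSpace.countableBasis X) => decide (A k ∩ V).Nonempty
  have hdecide (V : TopologicalSpace.countableBasis X) :
      ∀ᶠ k in atTop, decide (A (φ k) ∩ V).Nonempty = L V := by
    have hV := tendsto_pi_nhds.1 hL V
    rwa [nhds_discrete, tendsto_pure] at hV
  refine ⟨φ, hφ, fun x hx => ?_⟩
  obtain ⟨U, hU, hnot⟩ : ∃ U ∈ 𝓝 x, ¬ ∀ᶠ k in atTop, (A (φ k) ∩ U).Nonempty := by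
    simpa only [lowerLimit, mem_ofPred_eq, not_forall, exists_prop] using hx
  obtain ⟨V, hVbasis, hxV, hVU⟩ := hbasis.mem_nhds_iff.1 hU
  refine ⟨V, hbasis.mem_nhds hVbasis hxV, ?_⟩
  cases hLV : L ⟨V, hVbasis⟩ with
  | false =>
    filter_upwards [hdecide ⟨V, hVbasis⟩] with k hk
    rw [hLV, decide_eq_false_iff_not] at hk
    exact not_not.1 (not_disjoint_iff_nonempty_inter.not.2 hk)
  | true =>
    refine absurd ?_ hnot
    filter_upwards [hdecide ⟨V, hVbasis⟩] with k hk
    rw [hLV, decide_eq_true_iff] at hk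
    exact hk.mono (inter_subset_inter_right _ hVU)

end KuratowskiLimit

section LocallyConstant

variable {X Γ : Type*}

theorem eq_of_isPreconnected_of_eventually_eq [TopologicalSpace X] {f : X → Γ} {U : Set X}
    (hU : IsPreconnected U) (hf : ∀ s ∈ U, ∀ᶠ u in 𝓝 s, f u = f s) {x y : X} (hx : x ∈ U)
    (hy : y ∈ U) : f x = f y := by
  let _ : TopologicalSpace Γ := ⊥
  have : DiscreteTopology Γ := ⟨rfl⟩
  exact hU.constant (fun s hs => (tendsto_nhds_of_eventually_eq (hf s hs)).mono_left
    nhdsWithin_le_nhds) hx hy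

theorem exists_eventually_nhdsGT_eq [ConditionallyCompleteLinearOrder X] [TopologicalSpace X]
    [OrderTopology X] [DenselyOrdered X] [NoMaxOrder X] {f : X → Γ} {t : X}
    (hf : ∀ᶠ s in 𝓝[>] t, ∀ᶠ u in 𝓝 s, f u = f s) : ∃ v, ∀ᶠ u in 𝓝[>] t, f u = v := by
  obtain ⟨c, hc, hsub⟩ := mem_nhdsGT_iff_exists_Ioo_subset.1 hf
  obtain ⟨m, hm⟩ := nonempty_Ioo.2 (mem_Ioi.1 hc)
  refine ⟨f m, ?_⟩
  filter_upwards [Ioo_mem_nhdsGT hc] with u hu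
  exact eq_of_isPreconnected_of_eventually_eq isPreconnected_Ioo hsub hu hm

variable [LinearOrder X] [TopologicalSpace X] [OrderTopology X] [DenselyOrdered X] [NoMaxOrder X]
  [TopologicalSpace Γ] [T2Space Γ]

theorem rightLim_eq_of_eventually_eq {f : X → Γ} {t : X} {v : Γ}
    (hf : ∀ᶠ u in 𝓝[>] t, f u = v) : rightLim f t = v :=
  rightLim_eq_of_tendsto (tendsto_nhds_of_eventually_eq hf)

theorem eventually_rightLim_eq {f : X → Γ} {s : X} {v : Γ}
    (hf : ∀ᶠ u in 𝓝 s, f u = v) : ∀ᶠ u in 𝓝 s, rightLim f u = v := by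
  filter_upwards [hf.eventually_nhds] with u hu
  exact rightLim_eq_of_eventually_eq (hu.filter_mono nhdsWithin_le_nhds)

end LocallyConstant

section Signals

variable {Γ : Type*} {σ : ℝ → Γ}

theorem rightLocConst_iff : RightLocConst σ ↔ ∀ s, ∀ᶠ u in 𝓝[>] s, σ u = σ s := by
  refine forall_congr' fun s => ⟨?_, fun h => ?_⟩
  · rintro ⟨ε, hε, h⟩
    filter_upwards [Ioo_mem_nhdsGT (lt_add_of_pos_right s hε)] with u hu
    exact h u hu.1.le hu.2
  · obtain ⟨c, hc, hsub⟩ := mem_nhdsGT_iff_exists_Ioo_subset.1 h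
    refine ⟨c - s, sub_pos.2 hc, fun u hsu huc => ?_⟩
    rcases hsu.eq_or_lt with rfl | hsu
    · rfl
    · exact hsub ⟨hsu, by linarith⟩

theorem mem_switchTimes_iff {s : ℝ} : s ∈ SwitchTimes σ ↔ 0 < s ∧ ∃ᶠ u in 𝓝[<] s, σ u ≠ σ s := by
  refine and_congr_right fun _ => ?_
  rw [(nhdsLT_basis s).frequently_iff]
  constructor
  · intro h c hc
    obtain ⟨u, hcu, hus, hne⟩ := h (s - c) (sub_pos.2 hc)
    exact ⟨u, ⟨by linarith, hus⟩, hne⟩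
  · intro h ε hε
    obtain ⟨u, ⟨hεu, hus⟩, hne⟩ := h _ (sub_lt_self s hε)
    exact ⟨u, hεu, hus, hne⟩

theorem notMem_switchTimes_of_eventually_eq {s : ℝ} {v : Γ} (h : ∀ᶠ u in 𝓝 s, σ u = v) :
    s ∉ SwitchTimes σ := fun hs =>
  (mem_switchTimes_iff.1 hs).2 <| by
    filter_upwards [h.filter_mono nhdsWithin_le_nhds] with u hu
    exact not_not.2 (hu.trans h.self_of_nhds.symm)

theorem rightLocConst_rightLim [TopologicalSpace Γ] [T2Space Γ] {f : ℝ → Γ}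
    (hf : ∀ t, ∃ v, ∀ᶠ u in 𝓝[>] t, f u = v) : RightLocConst (rightLim f) := by
  refine rightLocConst_iff.2 fun t => ?_
  obtain ⟨v, hv⟩ := hf t
  filter_upwards [eventually_eventually_nhdsWithin.2 hv, self_mem_nhdsWithin] with u hu htu
  rw [isOpen_Ioi.nhdsWithin_eq htu] at hu
  rw [(eventually_rightLim_eq hu).self_of_nhds, rightLim_eq_of_eventually_eq hv]

namespace RightLocConst

theorem map₂ {Γ₁ Γ₂ : Type*} {u : ℝ → Γ₁} {v : ℝ → Γ₂} (hu : RightLocConst u)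
    (hv : RightLocConst v) (F : Γ₁ → Γ₂ → Γ) : RightLocConst fun s => F (u s) (v s) := by
  rw [rightLocConst_iff] at *
  intro s
  filter_upwards [hu s, hv s] with t hut hvt
  rw [hut, hvt]

theorem measurable [MeasurableSpace Γ] (hσ : RightLocConst σ) : Measurable σ := fun S _ =>
  .of_mem_nhdsGT fun s (hs : σ s ∈ S) => by
    filter_upwards [rightLocConst_iff.1 hσ s] with u hu
    rwa [mem_preimage, hu]

theorem eventually_eq_of_notMem_switchTimes (hσ : RightLocConst σ) {s : ℝ} (hs : 0 < s)
    (hsσ : s ∉ SwitchTimes σ) : ∀ᶠ u in 𝓝 s, σ u = σ s := by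
  have hleft : ∀ᶠ u in 𝓝[<] s, σ u = σ s := by
    simpa only [mem_switchTimes_iff, hs, true_and, not_frequently, not_not] using hsσ
  have hne : ∀ᶠ u in 𝓝[≠] s, σ u = σ s := by
    rw [← nhdsLT_sup_nhdsGT, eventually_sup]
    exact ⟨hleft, rightLocConst_iff.1 hσ s⟩
  exact eventually_nhdsWithin_iff.1 hne |>.mono fun u hu => (eq_or_ne u s).elim (congrArg σ) hu

theorem eq_of_disjoint_switchTimes (hσ : RightLocConst σ) {U : Set ℝ} (hU : IsPreconnected U)
    (hpos : U ⊆ Ioi 0) (hdisj : Disjoint (SwitchTimes σ) U) {x y : ℝ} (hx : x ∈ U) (hy : y ∈ U) :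
    σ x = σ y :=
  eq_of_isPreconnected_of_eventually_eq hU (fun _ hs =>
    hσ.eventually_eq_of_notMem_switchTimes (hpos hs) (hdisj.notMem_of_mem_right hs)) hx hy

theorem eventually_notMem_switchTimes (hσ : RightLocConst σ) (s : ℝ) :
    ∀ᶠ u in 𝓝[>] s, u ∉ SwitchTimes σ := by
  filter_upwards [eventually_eventually_nhdsWithin.2 (rightLocConst_iff.1 hσ s),
    self_mem_nhdsWithin] with u hu hsu
  rw [isOpen_Ioi.nhdsWithin_eq hsu] at hu
  exact notMem_switchTimes_of_eventually_eq hu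

theorem eventually_finite_switchTimes_inter_Ioo (hσ : RightLocConst σ) {a x : ℝ}
    (hfin : (SwitchTimes σ ∩ Ioo a x).Finite) :
    ∀ᶠ t in 𝓝[>] x, (SwitchTimes σ ∩ Ioo a t).Finite := by
  obtain ⟨c, hc, hsub⟩ := mem_nhdsGT_iff_exists_Ioo_subset.1 (hσ.eventually_notMem_switchTimes x)
  filter_upwards [Ioo_mem_nhdsGT hc] with t ht
  refine (hfin.insert x).subset ?_
  rintro s ⟨hs, has, hst⟩
  rcases lt_trichotomy s x with hsx | rfl | hxs
  · exact .inr ⟨hs, has, hsx⟩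
  · exact .inl rfl
  · exact absurd hs (hsub ⟨hxs, hst.trans ht.2⟩)

-- `Set.ncard` is `0` on infinite sets, so finiteness is not part of the hypothesis: it propagates
-- to the right by right-continuity, and to suprema by lower semicontinuity of cardinality.
theorem encard_switchTimes_inter_Ioo_le (hσ : RightLocConst σ) {a b : ℝ} (hab : a ≤ b) {n : ℕ}
    (h : ∀ t ∈ Ioc a b, (SwitchTimes σ ∩ Ioo a t).ncard ≤ n) :
    (SwitchTimes σ ∩ Ioo a b).encard ≤ n := by
  have hclosed : IsClosed {t | (SwitchTimes σ ∩ Ioo a t).encard ≤ n} := by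
    refine isClosed_iff_frequently.2 fun x hx => ?_
    have hlim : SwitchTimes σ ∩ Ioo a x ⊆
        lowerLimit (fun t => SwitchTimes σ ∩ Ioo a t) (𝓝 x) ∩ univ := by
      refine fun s hs => ⟨fun U hU => ?_, mem_univ s⟩
      filter_upwards [lt_mem_nhds hs.2.2] with t hst
      exact ⟨s, ⟨hs.1, hs.2.1, hst⟩, mem_of_mem_nhds hU⟩
    refine (encard_le_encard hlim).trans (encard_lowerLimit_inter_le isOpen_univ ?_)
    simpa only [inter_univ, mem_ofPred_eq] using hx
  refine IsClosed.Icc_subset_of_forall_mem_nhdsWithin (hclosed.inter isClosed_Icc) (by simp)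
    (fun x ⟨hx, hxab⟩ => ?_) (right_mem_Icc.2 hab)
  filter_upwards [hσ.eventually_finite_switchTimes_inter_Ioo (finite_of_encard_le_coe hx),
    Ioc_mem_nhdsGT hxab.2] with t hfin ht
  rw [← hfin.cast_ncard_eq]
  exact_mod_cast h t ⟨hxab.1.trans_lt ht.1, ht.2⟩

end RightLocConst

theorem IsSwitchingSignal.encard_switchTimes_inter_Ioo_le {τD : ℝ} {N₀ : ℕ}
    (hσ : IsSwitchingSignal σ τD N₀) (hτ : 0 < τD) {a b : ℝ} (ha : 0 ≤ a) (hab : a ≤ b) :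
    (SwitchTimes σ ∩ Ioo a b).encard ≤ ⌊N₀ + (b - a) / τD⌋₊ := by
  refine hσ.1.encard_switchTimes_inter_Ioo_le hab fun t ht => Nat.le_floor ?_
  calc ((SwitchTimes σ ∩ Ioo a t).ncard : ℝ) ≤ N₀ + (t - a) / τD := hσ.2 a t ha ht.1
    _ ≤ N₀ + (b - a) / τD := by gcongr; exact ht.2

theorem hasADT_of_encard_le {τD : ℝ} {N₀ : ℕ} (hτ : 0 ≤ τD)
    (h : ∀ a b, 0 ≤ a → a < b → (SwitchTimes σ ∩ Ioo a b).encard ≤ ⌊N₀ + (b - a) / τD⌋₊) :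
    HasADT σ τD N₀ := by
  intro a b ha hab
  have hbound : (0 : ℝ) ≤ N₀ + (b - a) / τD := by have := sub_nonneg.2 hab.le; positivity
  exact (Nat.le_floor_iff hbound).1 (ENat.toNat_le_of_le_natCast (h a b ha hab))

end Signals

section PointwiseLimit

variable {ι Γ : Type*} [TopologicalSpace Γ] {σ : ι → ℝ → Γ} {l : Filter ι}

theorem exists_eventually_tendsto_of_eventually_disjoint (hσ : ∀ k, RightLocConst (σ k)) {D : Set ℝ}
    (hD : Dense D) (hval : ∀ q ∈ D, ∃ v, Tendsto (fun k => σ k q) l (𝓝 v)) {s : ℝ} (hs : 0 < s)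
    {U : Set ℝ} (hU : U ∈ 𝓝 s) (hdisj : ∀ᶠ k in l, Disjoint (SwitchTimes (σ k)) U) :
    ∃ v, ∀ᶠ u in 𝓝 s, Tendsto (fun k => σ k u) l (𝓝 v) := by
  obtain ⟨a, b, hsab, hsub⟩ := mem_nhds_iff_exists_Ioo_subset.1 (inter_mem hU (Ioi_mem_nhds hs))
  obtain ⟨q, hq, hqD⟩ := hD.inter_open_nonempty (Ioo a b) isOpen_Ioo ⟨s, hsab⟩
  obtain ⟨v, hv⟩ := hval q hqD
  refine ⟨v, ?_⟩
  filter_upwards [Ioo_mem_nhds hsab.1 hsab.2] with u hu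
  refine hv.congr' ?_
  filter_upwards [hdisj] with k hk
  exact (hσ k).eq_of_disjoint_switchTimes isPreconnected_Ioo (hsub.trans inter_subset_right)
    (hk.mono_right (hsub.trans inter_subset_left)) hq hu

theorem exists_subseq_eventually_tendsto_of_notMem_lowerLimit [FirstCountableTopology Γ]
    [CompactSpace Γ] {σ : ℕ → ℝ → Γ} (hσ : ∀ k, RightLocConst (σ k)) :
    ∃ φ : ℕ → ℕ, StrictMono φ ∧
      ∀ s, 0 < s → s ∉ lowerLimit (fun k => SwitchTimes (σ (φ k))) atTop →
        ∃ v, ∀ᶠ u in 𝓝 s, Tendsto (fun k => σ (φ k) u) atTop (𝓝 v) := by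
  obtain ⟨L, φ, hφ, hL⟩ := CompactSpace.tendsto_subseq fun k (q : ℚ) => σ k q
  obtain ⟨ψ, hψ, hdisj⟩ := exists_subseq_eventually_disjoint_of_notMem_lowerLimit
    fun k => SwitchTimes (σ (φ k))
  have hval : ∀ x ∈ range ((↑) : ℚ → ℝ), ∃ v, Tendsto (fun k => σ (φ (ψ k)) x) atTop (𝓝 v) :=
    forall_mem_range.2 fun q => ⟨L q, (tendsto_pi_nhds.1 hL q).comp hψ.tendsto_atTop⟩
  refine ⟨φ ∘ ψ, hφ.comp hψ, fun s hs hsJ => ?_⟩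
  obtain ⟨U, hU, hUdisj⟩ := hdisj s hsJ
  exact exists_eventually_tendsto_of_eventually_disjoint (fun k => hσ (φ (ψ k)))
    Rat.denseRange_cast hval hs hU hUdisj

theorem exists_rightLocConst_tendsto [T2Space Γ] [Nonempty Γ] [l.NeBot] {J : Set ℝ}
    (hloc : ∀ s, 0 < s → s ∉ J → ∃ v, ∀ᶠ u in 𝓝 s, Tendsto (fun k => σ k u) l (𝓝 v))
    (hJ : ∀ t, 0 ≤ t → ∀ᶠ s in 𝓝[>] t, s ∉ J) :
    ∃ σ' : ℝ → Γ, RightLocConst σ' ∧ SwitchTimes σ' ⊆ J ∧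
      ∀ s, 0 < s → s ∉ J → Tendsto (fun k => σ k s) l (𝓝 (σ' s)) := by
  -- The signals are uncontrolled at negative times; `max s 0` makes the limit constant there.
  let f : ℝ → Γ := fun s => limUnder l fun k => σ k (max s 0)
  have hf {s : ℝ} {v : Γ} (hs : 0 < s) (hv : ∀ᶠ u in 𝓝 s, Tendsto (fun k => σ k u) l (𝓝 v)) :
      ∀ᶠ u in 𝓝 s, f u = v := by
    filter_upwards [hv, Ioi_mem_nhds hs] with u hu hu0
    simpa only [f, max_eq_left (mem_Ioi.1 hu0).le] using hu.limUnder_eq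
  have hright (t : ℝ) : ∃ v, ∀ᶠ u in 𝓝[>] t, f u = v := by
    rcases le_or_gt 0 t with ht | ht
    · apply exists_eventually_nhdsGT_eq
      filter_upwards [hJ t ht, self_mem_nhdsWithin] with s hsJ hts
      have hs : 0 < s := ht.trans_lt hts
      obtain ⟨v, hv⟩ := hloc s hs hsJ
      exact (hf hs hv).mono fun u hu => hu.trans (hf hs hv).self_of_nhds.symm
    · refine ⟨f 0, ?_⟩
      filter_upwards [Ioo_mem_nhdsGT ht] with u hu
      simp only [f, max_eq_right hu.2.le, max_self]
  refine ⟨rightLim f, rightLocConst_rightLim hright, fun s hs => ?_, fun s hs hsJ => ?_⟩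
  · by_contra hsJ
    obtain ⟨v, hv⟩ := hloc s hs.1 hsJ
    exact notMem_switchTimes_of_eventually_eq (eventually_rightLim_eq (hf hs.1 hv)) hs
  · obtain ⟨v, hv⟩ := hloc s hs hsJ
    rw [(eventually_rightLim_eq (hf hs hv)).self_of_nhds]
    exact hv.self_of_nhds

end PointwiseLimit

section SignalDist

variable {ι Γ : Type*} [PseudoMetricSpace Γ]

/-- The distance `d(u, v) = ∑_{n ≥ 1} 2⁻ⁿ ∫₀ⁿ ρ(u(s), v(s)) ds` between signals, for which
compactness is proved; the summation index is `k = n - 1`. -/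
noncomputable def signalDist (u v : ℝ → Γ) : ℝ :=
  ∑' k : ℕ, ((1 : ℝ) / 2) ^ (k + 1) * ∫ s in (0 : ℝ)..((k : ℝ) + 1), dist (u s) (v s)

variable [BoundedSpace Γ] {σ : ι → ℝ → Γ} {g : ℝ → Γ} {l : Filter ι} [l.IsCountablyGenerated]

theorem norm_dist_le_diam_univ (x y : Γ) : ‖dist x y‖ ≤ Metric.diam (univ : Set Γ) := by
  rw [Real.norm_of_nonneg dist_nonneg]
  exact Metric.dist_le_diam_of_mem BoundedSpace.bounded_univ (mem_univ x) (mem_univ y)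

theorem tendsto_intervalIntegral_dist_zero
    (hmeas : ∀ k, Measurable fun s => dist (σ k s) (g s)) {a b : ℝ}
    (hlim : ∀ᵐ s, s ∈ uIoc a b → Tendsto (fun k => σ k s) l (𝓝 (g s))) :
    Tendsto (fun k => ∫ s in a..b, dist (σ k s) (g s)) l (𝓝 0) := by
  rw [← intervalIntegral.integral_zero (a := a) (b := b) (μ := volume)]
  refine intervalIntegral.tendsto_integral_filter_of_dominated_convergence
    (fun _ => Metric.diam (univ : Set Γ)) (.of_forall fun k => (hmeas k).aestronglyMeasurable)
    (.of_forall fun k => .of_forall fun s _ => norm_dist_le_diam_univ _ _)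
    intervalIntegrable_const ?_
  filter_upwards [hlim] with s hs hsab
  exact tendsto_iff_dist_tendsto_zero.1 (hs hsab)

theorem summable_geometric_mul_add_one (D : ℝ) :
    Summable fun k : ℕ => ((1 : ℝ) / 2) ^ (k + 1) * (D * ((k : ℝ) + 1)) := by
  have h := (summable_nat_add_iff 1).2
    (summable_pow_mul_geometric_of_norm_lt_one 1 (r := (1 / 2 : ℝ)) (by norm_num))
  refine (h.mul_left D).congr fun k => ?_
  push_cast
  ring

theorem tendsto_signalDist_zero (hmeas : ∀ k, Measurable fun s => dist (σ k s) (g s))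
    (hlim : ∀ᵐ s, 0 < s → Tendsto (fun k => σ k s) l (𝓝 (g s))) :
    Tendsto (fun k => signalDist (σ k) g) l (𝓝 0) := by
  have hterm (n : ℕ) : Tendsto (fun k => ((1 : ℝ) / 2) ^ (n + 1) *
      ∫ s in (0 : ℝ)..((n : ℝ) + 1), dist (σ k s) (g s)) l (𝓝 0) := by
    have hn : (0 : ℝ) ≤ n + 1 := by positivity
    have hint : Tendsto (fun k => ∫ s in (0 : ℝ)..((n : ℝ) + 1), dist (σ k s) (g s)) l (𝓝 0) := by
      refine tendsto_intervalIntegral_dist_zero hmeas ?_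
      filter_upwards [hlim] with s hs hsn
      exact hs (uIoc_of_le hn ▸ hsn).1
    simpa only [mul_zero] using hint.const_mul _
  rw [← tsum_zero (α := ℝ) (β := ℕ)]
  refine tendsto_tsum_of_dominated_convergence
    (summable_geometric_mul_add_one (Metric.diam (univ : Set Γ))) hterm
    (.of_forall fun k n => ?_)
  rw [norm_mul, Real.norm_of_nonneg (by positivity : (0 : ℝ) ≤ (1 / 2) ^ (n + 1))]
  gcongr
  calc ‖∫ s in (0 : ℝ)..((n : ℝ) + 1), dist (σ k s) (g s)‖
      ≤ Metric.diam (univ : Set Γ) * |(n : ℝ) + 1 - 0| :=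
        intervalIntegral.norm_integral_le_of_norm_le_const fun s _ => norm_dist_le_diam_univ _ _
    _ = Metric.diam (univ : Set Γ) * ((n : ℝ) + 1) := by
        rw [sub_zero, abs_of_nonneg (by positivity)]

end SignalDist

section LocallyFinite

theorem eventually_nhdsGT_notMem {X : Type*} [LinearOrder X] [TopologicalSpace X] [OrderTopology X]
    {J : Set X} {t b : X} (htb : t < b) (hJ : (J ∩ Ioo t b).Finite) :
    ∀ᶠ s in 𝓝[>] t, s ∉ J := by
  have ht : t ∉ J ∩ Ioo t b := fun h => lt_irrefl t h.2.1
  filter_upwards [nhdsWithin_le_nhds (hJ.isClosed.isOpen_compl.mem_nhds ht), Ioo_mem_nhdsGT htb]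
    with s hs hsb hsJ
  exact hs ⟨hsJ, hsb⟩

theorem countable_inter_Ioi {J : Set ℝ} {a : ℝ} (hJ : ∀ b, a < b → (J ∩ Ioo a b).Countable) :
    (J ∩ Ioi a).Countable := by
  have hcount : (⋃ n : ℕ, J ∩ Ioo a (a + (n + 1))).Countable :=
    countable_iUnion fun n => hJ _ (lt_add_of_pos_right a n.cast_add_one_pos)
  refine hcount.mono ?_
  rintro s ⟨hs, has⟩
  obtain ⟨n, hn⟩ := exists_nat_gt (s - a)
  exact mem_iUnion.2 ⟨n, hs, has, by linarith⟩

end LocallyFinite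

/-- for a compact metric space `Γ`, the set `𝒮_a[τD,N₀]` of switching signals
with average dwell-time `τD > 0` and chatter bound `N₀` is compact for the metric
`d(u,v) = ∑_{n=1}^∞ 2⁻ⁿ ∫₀ⁿ ρ(u(s),v(s)) ds`, expressed here as sequential compactness:
every sequence in `𝒮_a[τD,N₀]` has a subsequence converging in this metric to a member
of `𝒮_a[τD,N₀]`. -/
theorem stmt4 {Γ : Type*} [MetricSpace Γ] [CompactSpace Γ]
    (τD : ℝ) (hτ : 0 < τD) (N₀ : ℕ)
    (σ : ℕ → ℝ → Γ) (hσ : ∀ k, IsSwitchingSignal (σ k) τD N₀) :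
    ∃ φ : ℕ → ℕ, StrictMono φ ∧ ∃ σ' : ℝ → Γ, IsSwitchingSignal σ' τD N₀ ∧
      Tendsto (fun l => ∑' k : ℕ, ((1:ℝ)/2) ^ (k + 1) *
          ∫ s in (0:ℝ)..((k : ℝ) + 1), dist (σ (φ l) s) (σ' s)) atTop (nhds 0) := by
  have : Nonempty Γ := ⟨σ 0 0⟩
  obtain ⟨φ, hφ, hloc⟩ :=
    exists_subseq_eventually_tendsto_of_notMem_lowerLimit fun k => (hσ k).1
  set J := lowerLimit (fun k => SwitchTimes (σ (φ k))) atTop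
  have hJcard (a b : ℝ) (ha : 0 ≤ a) (hab : a < b) :
      (J ∩ Ioo a b).encard ≤ ⌊N₀ + (b - a) / τD⌋₊ :=
    encard_lowerLimit_inter_le isOpen_Ioo <| .of_forall fun k =>
      (hσ (φ k)).encard_switchTimes_inter_Ioo_le hτ ha hab.le
  have hJfin (a b : ℝ) (ha : 0 ≤ a) (hab : a < b) : (J ∩ Ioo a b).Finite :=
    finite_of_encard_le_coe (hJcard a b ha hab)
  obtain ⟨σ', hσ', hswitch, hlim⟩ := exists_rightLocConst_tendsto hloc fun t ht =>
    eventually_nhdsGT_notMem (lt_add_one t) (hJfin t _ ht (lt_add_one t))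
  have hADT : HasADT σ' τD N₀ := hasADT_of_encard_le hτ.le fun a b ha hab =>
    (encard_le_encard (inter_subset_inter_left _ hswitch)).trans (hJcard a b ha hab)
  have hJcount : (J ∩ Ioi 0).Countable :=
    countable_inter_Ioi fun b hb => (hJfin 0 b le_rfl hb).countable
  have hae : ∀ᵐ s, 0 < s → Tendsto (fun k => σ (φ k) s) atTop (𝓝 (σ' s)) := by
    filter_upwards [hJcount.ae_notMem volume] with s hs hs0
    exact hlim s hs0 fun hsJ => hs ⟨hsJ, hs0⟩
  exact ⟨φ, hφ, σ', ⟨hσ', hADT⟩,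
    tendsto_signalDist_zero (fun k => ((hσ (φ k)).1.map₂ hσ' dist).measurable) hae⟩
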